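/- Every conductor submonoid H of a factorial monoid F has catenary degree at most 3; consequently every set of lengths 𝖫(a), a ∈ H, is an interval of integers. -/

import Mathlib

def IsPrimeElem {F : Type*} [CancelCommMonoid F] (p : F) : Prop :=
  ¬ IsUnit p ∧ ∀ a b : F, p ∣ a * b → p ∣ a ∨ p ∣ b

def IsFactorialMonoid (F : Type*) [CancelCommMonoid F] : Prop :=
  ∀ a : F, ∃ (u : F) (l : Multiset F), IsUnit u ∧ (∀ p ∈ l, IsPrimeElem p) ∧ a = u * l.prod

/-- `a` is an invertible element of the submonoid `H`, i.e. `a ∈ H^×`. -/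
def IsUnitIn {F : Type*} [CancelCommMonoid F] (H : Submonoid F) (a : F) : Prop :=
  a ∈ H ∧ ∃ b ∈ H, a * b = 1

/-- `H` is a conductor submonoid of `F`: `H ≠ H^×` and `H \ H^×` is an s-ideal of `F`. -/
def IsConductorSubmonoid {F : Type*} [CancelCommMonoid F] (H : Submonoid F) : Prop :=
  (∃ a ∈ H, ¬ IsUnitIn H a) ∧
  ∀ a ∈ H, ¬ IsUnitIn H a → ∀ y : F, a * y ∈ H ∧ ¬ IsUnitIn H (a * y)

/-- `a` is an atom of the submonoid `H`. -/
def IsAtomIn {F : Type*} [CancelCommMonoid F] (H : Submonoid F) (a : F) : Prop :=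
  a ∈ H ∧ ¬ IsUnitIn H a ∧
    ∀ b c : F, b ∈ H → c ∈ H → a = b * c → IsUnitIn H b ∨ IsUnitIn H c


/-- The set of factorizations of `a` into atoms of `H` (as multisets of atoms). -/
def FactorizationsOf {F : Type*} [CancelCommMonoid F] (H : Submonoid F) (a : F) :
    Set (Multiset F) :=
  {l | (∀ u ∈ l, IsAtomIn H u) ∧ l.prod = a}

/-- The distance between two factorizations: cancel the common part and take the maximum
of the remaining lengths. -/
def factDist {F : Type*} [CancelCommMonoid F] [DecidableEq F]
    (z z' : Multiset F) : ℕ :=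
  max (Multiset.card (z - z')) (Multiset.card (z' - z))

/-- The set of lengths of `a`. -/
def LengthSetOf {F : Type*} [CancelCommMonoid F] (H : Submonoid F) (a : F) : Set ℕ :=
  {n | ∃ l ∈ FactorizationsOf H a, Multiset.card l = n}

/-! Let `I` be the set of nonunits of `H`, an ideal of `F`; the atoms of `H` are the elements of
`I` outside `I * I`. Argue by induction on `a` along proper divisibility. Then any two
factorizations of `a` refining the same splitting `a = x * y` with `x, y ∈ I` are connected, so it
is enough to connect splittings. Multiplying an atom by a prime `p` of `F` gives an element with a
factorization of length at most two, so that `(x, p * y)` and `(x * p, y)` are connected by a step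
of distance at most three, and hence so are `(x, t * y)` and `(x * t, y)` for every `t`. Two
splittings of `a` have the form `(p * r, q * s)` and `(p * q, r * s)`. As long as `p * r` or `q * s`
is not an atom, such moves either connect the two splittings directly or transfer a nonunit factor
of `F` from `p` to `q` or from `s` to `r`; since this replaces `p * s` by a proper divisor, the
process ends with the first splitting connected to the second or to a product of two atoms. The same
holds with the roles exchanged, and two products of two atoms have distance at most two. -/

section FactorialMonoid

variable {F : Type*} [CancelCommMonoid F]

@[elab_as_elim]
theorem IsFactorialMonoid.induction (hF : IsFactorialMonoid F) {P : F → Prop}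
    (unit : ∀ u, IsUnit u → P u) (prime_mul : ∀ p a, IsPrimeElem p → P a → P (p * a)) (a : F) :
    P a := by
  obtain ⟨u, l, hu, hl, rfl⟩ := hF a
  induction l using Multiset.induction_on with
  | empty => simpa only [Multiset.prod_zero, mul_one] using unit u hu
  | cons p l ih =>
    rw [Multiset.prod_cons, mul_left_comm]
    exact prime_mul p _ (hl p (Multiset.mem_cons_self p l))
      (ih fun q hq => hl q (Multiset.mem_cons_of_mem hq))

theorem IsPrimeElem.isPrimal_mul {p a : F} (hp : IsPrimeElem p) (ha : IsPrimal a) :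
    IsPrimal (p * a) := by
  intro b c h
  rcases hp.2 b c (dvd_of_mul_right_dvd h) with ⟨b, rfl⟩ | ⟨c, rfl⟩
  · rw [mul_assoc] at h
    obtain ⟨a₁, a₂, h₁, h₂, rfl⟩ := ha ((IsLeftRegular.all p).dvd_cancel_left.1 h)
    exact ⟨p * a₁, a₂, mul_dvd_mul_left p h₁, h₂, (mul_assoc ..).symm⟩
  · rw [mul_left_comm] at h
    obtain ⟨a₁, a₂, h₁, h₂, rfl⟩ := ha ((IsLeftRegular.all p).dvd_cancel_left.1 h)
    exact ⟨a₁, p * a₂, h₁, mul_dvd_mul_left p h₂, mul_left_comm ..⟩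

theorem IsFactorialMonoid.decompositionMonoid (hF : IsFactorialMonoid F) :
    DecompositionMonoid F :=
  ⟨hF.induction (fun _ hu => hu.isPrimal) fun _ _ hp ha => hp.isPrimal_mul ha⟩

theorem exists_common_refinement_of_mul_eq_mul [DecompositionMonoid F] {x y z w : F}
    (h : x * y = z * w) : ∃ a b c d, x = a * b ∧ y = c * d ∧ z = a * c ∧ w = b * d := by
  obtain ⟨a, b, ⟨c, rfl⟩, ⟨d, rfl⟩, rfl⟩ :=
    exists_dvd_and_dvd_of_dvd_mul (a := x) (Dvd.intro y h)
  exact ⟨a, b, c, d, rfl, mul_left_cancel (h.trans (mul_mul_mul_comm ..)), rfl, rfl⟩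

/-- Proper divisibility: Mathlib's `DvdNotUnit` for a monoid without zero. -/
def ProperDvd (b a : F) : Prop := ∃ c, ¬IsUnit c ∧ b * c = a

theorem ProperDvd.mul_right {a b : F} (h : ProperDvd b a) (c : F) : ProperDvd (b * c) (a * c) := by
  obtain ⟨d, hd, rfl⟩ := h
  exact ⟨d, hd, mul_right_comm b c d⟩

theorem acc_properDvd_of_dvd {a b : F} (ha : Acc ProperDvd a) (h : b ∣ a) : Acc ProperDvd b := by
  obtain ⟨d, rfl⟩ := h
  refine ⟨b, ?_⟩
  rintro e ⟨c, hc, rfl⟩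
  exact ha.inv ⟨c * d, fun hu => hc (isUnit_of_mul_isUnit_left hu), (mul_assoc ..).symm⟩

theorem IsPrimeElem.acc_properDvd_mul {p a : F} (hp : IsPrimeElem p) (ha : Acc ProperDvd a) :
    Acc ProperDvd (p * a) := by
  induction ha with
  | intro a ha ih =>
    refine ⟨_, ?_⟩
    rintro b ⟨c, hc, h⟩
    rcases hp.2 b c (Dvd.intro a h.symm) with ⟨b, rfl⟩ | ⟨c, rfl⟩
    · exact ih b ⟨c, hc, mul_left_cancel ((mul_assoc ..).symm.trans h)⟩
    · exact acc_properDvd_of_dvd ⟨a, ha⟩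
        (Dvd.intro c (mul_left_cancel ((mul_left_comm ..).trans h)))

theorem IsFactorialMonoid.wellFounded_properDvd (hF : IsFactorialMonoid F) :
    WellFounded (ProperDvd (F := F)) := by
  refine ⟨hF.induction (fun u hu => ⟨u, ?_⟩) fun _ _ hp ha => hp.acc_properDvd_mul ha⟩
  rintro b ⟨c, hc, rfl⟩
  exact absurd (isUnit_of_mul_isUnit_right hu) hc

end FactorialMonoid

section Atoms

variable {F : Type*} [CancelCommMonoid F] {H : Submonoid F}

/-- `x` is a nonunit of the submonoid `H`, i.e. `x ∈ H \ H^×`. -/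
def IsNonunitIn (H : Submonoid F) (x : F) : Prop := x ∈ H ∧ ¬IsUnitIn H x

theorem isAtomIn_iff {x : F} :
    IsAtomIn H x ↔ IsNonunitIn H x ∧ ∀ b c, IsNonunitIn H b → IsNonunitIn H c → x ≠ b * c := by
  constructor
  · rintro ⟨hx, hxu, hirr⟩
    exact ⟨⟨hx, hxu⟩, fun b c hb hc h => (hirr b c hb.1 hc.1 h).elim hb.2 hc.2⟩
  · rintro ⟨⟨hx, hxu⟩, hirr⟩
    refine ⟨hx, hxu, fun b c hb hc h => ?_⟩
    by_contra! hbc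
    exact hirr b c ⟨hb, hbc.1⟩ ⟨hc, hbc.2⟩ h

theorem IsAtomIn.isNonunitIn {x : F} (hx : IsAtomIn H x) : IsNonunitIn H x := ⟨hx.1, hx.2.1⟩

theorem IsAtomIn.ne_mul {x b c : F} (hx : IsAtomIn H x) (hb : IsNonunitIn H b)
    (hc : IsNonunitIn H c) : x ≠ b * c :=
  (isAtomIn_iff.1 hx).2 b c hb hc

theorem IsNonunitIn.exists_eq_mul_of_not_isAtomIn {x : F} (hx : IsNonunitIn H x)
    (hx' : ¬IsAtomIn H x) : ∃ b c, IsNonunitIn H b ∧ IsNonunitIn H c ∧ x = b * c := by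
  by_contra! h
  exact hx' (isAtomIn_iff.2 ⟨hx, h⟩)

namespace IsConductorSubmonoid

variable (hH : IsConductorSubmonoid H)
include hH

theorem isNonunitIn_mul_right {x : F} (hx : IsNonunitIn H x) (y : F) : IsNonunitIn H (x * y) :=
  hH.2 x hx.1 hx.2 y

theorem isNonunitIn_of_dvd {x y : F} (hx : IsNonunitIn H x) (h : x ∣ y) : IsNonunitIn H y := by
  obtain ⟨c, rfl⟩ := h
  exact hH.isNonunitIn_mul_right hx c

theorem not_isUnit {x : F} (hx : IsNonunitIn H x) : ¬IsUnit x := fun hu =>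
  (hH.isNonunitIn_of_dvd hx hu.dvd (y := 1)).2 ⟨H.one_mem, 1, H.one_mem, mul_one 1⟩

theorem isAtomIn_of_dvd {u x : F} (hu : IsAtomIn H u) (hx : IsNonunitIn H x) (h : x ∣ u) :
    IsAtomIn H x := by
  obtain ⟨d, rfl⟩ := h
  refine isAtomIn_iff.2 ⟨hx, ?_⟩
  rintro b c hb hc rfl
  exact hu.ne_mul hb (hH.isNonunitIn_mul_right hc d) (mul_assoc b c d)

theorem isAtomIn_mul_isUnit {u e : F} (hu : IsAtomIn H u) (he : IsUnit e) :
    IsAtomIn H (u * e) :=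
  hH.isAtomIn_of_dvd hu (hH.isNonunitIn_mul_right hu.isNonunitIn e) (he.mul_right_dvd.2 dvd_rfl)

theorem isAtomIn_prime_mul {p b : F} (hp : IsPrimeElem p) (hpb : IsNonunitIn H (p * b))
    (hb : ¬IsNonunitIn H b) : IsAtomIn H (p * b) := by
  refine isAtomIn_iff.2 ⟨hpb, fun d e hd he h => hb ?_⟩
  rcases hp.2 d e (Dvd.intro b h) with ⟨d, rfl⟩ | ⟨e, rfl⟩
  · exact hH.isNonunitIn_of_dvd he
      (Dvd.intro_left d (mul_left_cancel (h.trans (mul_assoc ..))).symm)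
  · exact hH.isNonunitIn_of_dvd hd
      (Dvd.intro e (mul_left_cancel (h.trans (mul_left_comm ..))).symm)

theorem isAtomIn_of_mul_eq_mul_prime {u p b c : F} (hu : IsAtomIn H u) (hp : IsPrimeElem p)
    (hb : IsNonunitIn H b) (hc : IsNonunitIn H c) (h : u * p = b * c) (hpb : p ∣ b) :
    IsAtomIn H b ∧ IsAtomIn H c := by
  obtain ⟨b, rfl⟩ := hpb
  have hbc : u = b * c := mul_left_cancel ((mul_comm p u).trans (h.trans (mul_assoc p b c)))
  exact ⟨hH.isAtomIn_prime_mul hp hb fun hb => hu.ne_mul hb hc hbc,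
    hH.isAtomIn_of_dvd hu hc (Dvd.intro_left b hbc.symm)⟩

end IsConductorSubmonoid

end Atoms

section Factorizations

variable {F : Type*} [CancelCommMonoid F] {H : Submonoid F} {a b u : F} {z z' : Multiset F}

theorem singleton_mem_factorizationsOf (hu : IsAtomIn H u) : {u} ∈ FactorizationsOf H u :=
  ⟨fun _ hw => Multiset.mem_singleton.1 hw ▸ hu, Multiset.prod_singleton u⟩

theorem add_mem_factorizationsOf (hz : z ∈ FactorizationsOf H a) (hz' : z' ∈ FactorizationsOf H b) :
    z + z' ∈ FactorizationsOf H (a * b) :=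
  ⟨fun w hw => (Multiset.mem_add.1 hw).elim (hz.1 w) (hz'.1 w),
    by rw [Multiset.prod_add, hz.2, hz'.2]⟩

theorem mem_factorizationsOf_prod_of_le (hz : z ∈ FactorizationsOf H a) (h : z' ≤ z) :
    z' ∈ FactorizationsOf H z'.prod :=
  ⟨fun w hw => hz.1 w (Multiset.mem_of_le h hw), rfl⟩

theorem add_mem_factorizationsOf_of_cons {s : Multiset F} (hz : u ::ₘ z ∈ FactorizationsOf H a)
    (hs : s ∈ FactorizationsOf H (u * b)) : s + z ∈ FactorizationsOf H (a * b) := by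
  have h := add_mem_factorizationsOf hs (mem_factorizationsOf_prod_of_le hz (z.le_cons_self u))
  rwa [mul_right_comm, ← Multiset.prod_cons, hz.2] at h

theorem eq_zero_of_mem_factorizationsOf (hz : z ∈ FactorizationsOf H a) (ha : IsUnitIn H a) :
    z = 0 := by
  obtain ⟨-, b, hb, hab⟩ := ha
  refine Multiset.eq_zero_of_forall_notMem fun u hu => (hz.1 u hu).2.1 ?_
  obtain ⟨r, rfl⟩ := Multiset.exists_cons_of_mem hu
  have hr : r.prod ∈ H :=
    H.multiset_prod_mem r fun w hw => (hz.1 w (Multiset.mem_cons_of_mem hw)).1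
  refine ⟨(hz.1 u hu).1, r.prod * b, H.mul_mem hr hb, ?_⟩
  rw [← mul_assoc, ← Multiset.prod_cons, hz.2, hab]

theorem IsAtomIn.eq_singleton_of_mem_factorizationsOf (hu : IsAtomIn H u)
    (hz : z ∈ FactorizationsOf H u) : z = {u} := by
  have hz0 : z ≠ 0 := by
    rintro rfl
    exact hu.2.1 ⟨hu.1, 1, H.one_mem, by rw [← hz.2, Multiset.prod_zero, mul_one]⟩
  obtain ⟨v, hv⟩ := Multiset.exists_mem_of_ne_zero hz0
  obtain ⟨r, rfl⟩ := Multiset.exists_cons_of_mem hv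
  have hr := mem_factorizationsOf_prod_of_le hz (Multiset.le_cons_self r v)
  have hvr : u = v * r.prod := by rw [← hz.2, Multiset.prod_cons]
  have hrH : r.prod ∈ H := H.multiset_prod_mem r fun w hw => (hr.1 w hw).1
  have hr0 : r = 0 := eq_zero_of_mem_factorizationsOf hr
    ((hu.2.2 v r.prod (hz.1 v hv).1 hrH hvr).resolve_left (hz.1 v hv).2.1)
  rw [hvr, hr0, Multiset.prod_zero, mul_one, Multiset.cons_zero]

theorem eq_of_mem_factorizationsOf_of_card_le_one (hz : z ∈ FactorizationsOf H a)
    (hz' : z' ∈ FactorizationsOf H a) (hcard : z.card ≤ 1) : z = z' := by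
  rcases Nat.le_one_iff_eq_zero_or_eq_one.1 hcard with h | h
  · obtain rfl := Multiset.card_eq_zero.1 h
    have ha : IsUnitIn H a :=
      ⟨hz.2 ▸ H.one_mem, 1, H.one_mem, by rw [← hz.2, Multiset.prod_zero, mul_one]⟩
    exact (eq_zero_of_mem_factorizationsOf hz' ha).symm
  · obtain ⟨u, rfl⟩ := Multiset.card_eq_one.1 h
    obtain rfl : u = a := (Multiset.prod_singleton u).symm.trans hz.2
    exact ((hz.1 u (Multiset.mem_singleton_self u)).eq_singleton_of_mem_factorizationsOf hz').symm

namespace IsConductorSubmonoid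

variable (hH : IsConductorSubmonoid H)
include hH

theorem properDvd_mul_left {x y : F} (hy : IsNonunitIn H y) : ProperDvd x (x * y) :=
  ⟨y, hH.not_isUnit hy, rfl⟩

theorem properDvd_mul_right {x y : F} (hx : IsNonunitIn H x) : ProperDvd y (x * y) :=
  ⟨x, hH.not_isUnit hx, mul_comm y x⟩

theorem exists_eq_add_of_one_lt_card (hz : z ∈ FactorizationsOf H a) (hcard : 1 < z.card) :
    ∃ x y s t, IsNonunitIn H x ∧ IsNonunitIn H y ∧ s ∈ FactorizationsOf H x ∧
      t ∈ FactorizationsOf H y ∧ x * y = a ∧ z = s + t := by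
  obtain ⟨u, t, rfl, ht⟩ := Multiset.card_eq_succ_iff.1 (Nat.sub_add_cancel hcard.le).symm
  obtain ⟨v, hv⟩ := Multiset.card_pos_iff_exists_mem.1 (ht ▸ Nat.sub_pos_of_lt hcard)
  obtain ⟨r, rfl⟩ := Multiset.exists_cons_of_mem hv
  have hu_atom : IsAtomIn H u := hz.1 u (Multiset.mem_cons_self u _)
  have hv_atom : IsAtomIn H v := hz.1 v (Multiset.mem_cons_of_mem hv)
  refine ⟨u, (v ::ₘ r).prod, {u}, v ::ₘ r, hu_atom.isNonunitIn, ?_,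
    singleton_mem_factorizationsOf hu_atom,
    mem_factorizationsOf_prod_of_le hz (Multiset.le_cons_self _ u), ?_,
    (Multiset.singleton_add u _).symm⟩
  · rw [Multiset.prod_cons]
    exact hH.isNonunitIn_mul_right hv_atom.isNonunitIn r.prod
  · rw [← Multiset.prod_cons, hz.2]

theorem exists_cons_mem_factorizationsOf (hF : IsFactorialMonoid F) {x : F}
    (hx : IsNonunitIn H x) : ∃ u z, u ::ₘ z ∈ FactorizationsOf H x := by
  induction x using hF.wellFounded_properDvd.induction with
  | _ x ih =>
    by_cases hat : IsAtomIn H x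
    · exact ⟨x, 0, singleton_mem_factorizationsOf hat⟩
    obtain ⟨b, c, hb, hc, rfl⟩ := hx.exists_eq_mul_of_not_isAtomIn hat
    obtain ⟨u, z, hz⟩ := ih b (hH.properDvd_mul_left hc) hb
    obtain ⟨v, z', hz'⟩ := ih c (hH.properDvd_mul_right hb) hc
    exact ⟨u, z + v ::ₘ z', Multiset.cons_add u z _ ▸ add_mem_factorizationsOf hz hz'⟩

theorem exists_mem_factorizationsOf_mul_isUnit {e : F} (hu : IsAtomIn H u) (he : IsUnit e) :
    ∃ s ∈ FactorizationsOf H (u * e), s.card ≤ 2 :=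
  ⟨{u * e}, singleton_mem_factorizationsOf (hH.isAtomIn_mul_isUnit hu he), by simp⟩

theorem exists_mem_factorizationsOf_mul_prime {p : F} (hu : IsAtomIn H u) (hp : IsPrimeElem p) :
    ∃ s ∈ FactorizationsOf H (u * p), s.card ≤ 2 := by
  by_cases hat : IsAtomIn H (u * p)
  · exact ⟨{u * p}, singleton_mem_factorizationsOf hat, by simp⟩
  have hup : IsNonunitIn H (u * p) := hH.isNonunitIn_mul_right hu.isNonunitIn p
  obtain ⟨b, c, hb, hc, h⟩ := hup.exists_eq_mul_of_not_isAtomIn hat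
  have hbc : IsAtomIn H b ∧ IsAtomIn H c := by
    rcases hp.2 b c (Dvd.intro_left u h) with hpb | hpc
    · exact hH.isAtomIn_of_mul_eq_mul_prime hu hp hb hc h hpb
    · exact (hH.isAtomIn_of_mul_eq_mul_prime hu hp hc hb (h.trans (mul_comm b c)) hpc).symm
  rw [h]
  exact ⟨{b} + {c}, add_mem_factorizationsOf (singleton_mem_factorizationsOf hbc.1)
    (singleton_mem_factorizationsOf hbc.2), by simp⟩

end IsConductorSubmonoid

end Factorizations

section Chains

theorem exists_seq_of_reflTransGen {α : Type*} {r : α → α → Prop} {x y : α}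
    (h : Relation.ReflTransGen r x y) :
    ∃ (k : ℕ) (c : ℕ → α), c 0 = x ∧ c k = y ∧ ∀ i < k, r (c i) (c (i + 1)) := by
  induction h using Relation.ReflTransGen.head_induction_on with
  | refl => exact ⟨0, fun _ => y, rfl, rfl, fun i hi => absurd hi i.not_lt_zero⟩
  | @head x _ hstep _ ih =>
    obtain ⟨k, c, rfl, hck, hc⟩ := ih
    refine ⟨k + 1, fun i => i.casesOn x c, rfl, hck, fun i hi => ?_⟩
    cases i with
    | zero => exact hstep
    | succ i => exact hc i (Nat.lt_of_succ_lt_succ hi)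

variable {F : Type*} [CancelCommMonoid F] [DecidableEq F] {H : Submonoid F} {N : ℕ} {a b : F}
  {z z' : Multiset F}

theorem factDist_comm (z z' : Multiset F) : factDist z z' = factDist z' z := max_comm _ _

theorem factDist_add_right (z z' t : Multiset F) : factDist (z + t) (z' + t) = factDist z z' := by
  simp only [factDist, add_tsub_add_eq_tsub_right]

theorem factDist_le_max_card (z z' : Multiset F) : factDist z z' ≤ max z.card z'.card :=
  max_le_max (Multiset.card_le_card tsub_le_self) (Multiset.card_le_card tsub_le_self)

theorem prod_sub_eq_prod_sub (h : z.prod = z'.prod) : (z - z').prod = (z' - z).prod := by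
  apply mul_right_cancel (b := (z ∩ z').prod)
  rw [← Multiset.prod_add, ← Multiset.prod_add, Multiset.sub_add_inter, Multiset.inter_comm,
    Multiset.sub_add_inter, h]

theorem two_le_card_sub (hz : z ∈ FactorizationsOf H a) (hz' : z' ∈ FactorizationsOf H a)
    (hne : z ≠ z') : 2 ≤ (z - z').card := by
  by_contra! hcard
  have hprod : (z - z').prod = (z' - z).prod := prod_sub_eq_prod_sub (hz.2.trans hz'.2.symm)
  have hsub : z - z' = z' - z := eq_of_mem_factorizationsOf_of_card_le_one
    (mem_factorizationsOf_prod_of_le hz tsub_le_self)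
    (hprod ▸ mem_factorizationsOf_prod_of_le hz' tsub_le_self) (Nat.le_of_lt_succ hcard)
  apply hne
  rw [← Multiset.sub_add_inter z z', hsub, Multiset.inter_comm, Multiset.sub_add_inter]

theorem card_add_two_le_card_add_factDist (hz : z ∈ FactorizationsOf H a)
    (hz' : z' ∈ FactorizationsOf H a) (hne : z ≠ z') :
    z'.card + 2 ≤ z.card + factDist z z' := by
  have hcard : z.card = (z - z').card + (z ∩ z').card := by
    rw [← Multiset.card_add, Multiset.sub_add_inter]
  have hcard' : z'.card = (z' - z).card + (z ∩ z').card := by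
    rw [← Multiset.card_add, Multiset.inter_comm, Multiset.sub_add_inter]
  have hdist : (z' - z).card ≤ factDist z z' := le_max_right _ _
  have := two_le_card_sub hz hz' hne
  omega

/-- `z` and `z'` are connected by a chain of factorizations of `a` whose consecutive distances are
at most `N`. -/
def FactChain (H : Submonoid F) (N : ℕ) (a : F) : Multiset F → Multiset F → Prop :=
  Relation.ReflTransGen fun z z' =>
    z ∈ FactorizationsOf H a ∧ z' ∈ FactorizationsOf H a ∧ factDist z z' ≤ N

namespace FactChain

theorem single (hz : z ∈ FactorizationsOf H a) (hz' : z' ∈ FactorizationsOf H a)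
    (hd : factDist z z' ≤ N) : FactChain H N a z z' :=
  Relation.ReflTransGen.single ⟨hz, hz', hd⟩

theorem symm (h : FactChain H N a z z') : FactChain H N a z' z := by
  refine Relation.ReflTransGen.mono ?_ _ _ (Relation.ReflTransGen.swap _ _ h)
  rintro x y ⟨hy, hx, hd⟩
  exact ⟨hx, hy, factDist_comm x y ▸ hd⟩

theorem add_right (h : FactChain H N a z z') {t : Multiset F} (ht : t ∈ FactorizationsOf H b) :
    FactChain H N (a * b) (z + t) (z' + t) := by
  refine Relation.ReflTransGen.lift (· + t) ?_ _ _ h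
  rintro x y ⟨hx, hy, hd⟩
  exact ⟨add_mem_factorizationsOf hx ht, add_mem_factorizationsOf hy ht,
    (factDist_add_right x y t).trans_le hd⟩

theorem exists_seq (h : FactChain H N a z z') (hz : z ∈ FactorizationsOf H a) :
    ∃ (k : ℕ) (c : ℕ → Multiset F), c 0 = z ∧ c k = z' ∧
      (∀ i ≤ k, c i ∈ FactorizationsOf H a) ∧ ∀ i < k, factDist (c i) (c (i + 1)) ≤ N := by
  obtain ⟨k, c, rfl, hck, hstep⟩ := exists_seq_of_reflTransGen h
  refine ⟨k, c, rfl, hck, fun i hi => ?_, fun i hi => (hstep i hi).2.2⟩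
  cases i with
  | zero => exact hz
  | succ i => exact (hstep i hi).2.1

theorem mem_lengthSetOf (h : FactChain H 3 a z z') (hz : z ∈ FactorizationsOf H a) {j : ℕ}
    (hzj : z.card ≤ j) (hjz' : j ≤ z'.card) : j ∈ LengthSetOf H a := by
  induction h with
  | refl => exact ⟨z, hz, le_antisymm hzj hjz'⟩
  | @tail x y _ hxy ih =>
    obtain ⟨hx, hy, hd⟩ := hxy
    rcases le_or_gt j x.card with hjx | hxj
    · exact ih hjx
    have hne : x ≠ y := by
      rintro rfl
      omega
    have hcard : y.card + 2 ≤ x.card + factDist x y := card_add_two_le_card_add_factDist hx hy hne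
    exact ⟨y, hy, by omega⟩

end FactChain

/-- Any two factorizations of `a` can be connected by a chain with consecutive distances at
most `N`, i.e. the catenary degree of `a` in `H` is at most `N`. -/
def CatenaryDegreeLE (H : Submonoid F) (N : ℕ) (a : F) : Prop :=
  ∀ z ∈ FactorizationsOf H a, ∀ z' ∈ FactorizationsOf H a, FactChain H N a z z'

end Chains

section Splittings

variable {F : Type*} [CancelCommMonoid F] [DecidableEq F] {H : Submonoid F} {N : ℕ}
  {a x y x' y' x'' y'' : F}

/-- The splittings `a = x * y` and `a = x' * y'` are linked: every factorization of `a` obtained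
by concatenating factorizations of `x` and `y` is connected to every one obtained from `x'` and
`y'`. -/
def SplittingsLinked (H : Submonoid F) (N : ℕ) (a x y x' y' : F) : Prop :=
  ∀ s ∈ FactorizationsOf H x, ∀ t ∈ FactorizationsOf H y,
    ∀ s' ∈ FactorizationsOf H x', ∀ t' ∈ FactorizationsOf H y', FactChain H N a (s + t) (s' + t')

namespace SplittingsLinked

theorem symm (h : SplittingsLinked H N a x y x' y') : SplittingsLinked H N a x' y' x y :=
  fun s' hs' t' ht' s hs t ht => (h s hs t ht s' hs' t' ht').symm

theorem swap (h : SplittingsLinked H N a x y x' y') : SplittingsLinked H N a y x y' x' := by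
  intro t ht s hs t' ht' s' hs'
  rw [add_comm t, add_comm t']
  exact h s hs t ht s' hs' t' ht'

theorem trans (hF : IsFactorialMonoid F) (hH : IsConductorSubmonoid H) (hx' : IsNonunitIn H x')
    (hy' : IsNonunitIn H y') (h : SplittingsLinked H N a x y x' y')
    (h' : SplittingsLinked H N a x' y' x'' y'') : SplittingsLinked H N a x y x'' y'' := by
  obtain ⟨u, s', hs'⟩ := hH.exists_cons_mem_factorizationsOf hF hx'
  obtain ⟨v, t', ht'⟩ := hH.exists_cons_mem_factorizationsOf hF hy'
  exact fun s hs t ht s'' hs'' t'' ht'' =>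
    (h s hs t ht _ hs' _ ht').trans (h' _ hs' _ ht' s'' hs'' t'' ht'')

theorem refl_of_catenaryDegreeLE (hx : CatenaryDegreeLE H N x) (hy : CatenaryDegreeLE H N y) :
    SplittingsLinked H N (x * y) x y x y := by
  intro s hs t ht s' hs' t' ht'
  have hst : FactChain H N (x * y) (s + t) (s' + t) := (hx s hs s' hs').add_right ht
  have hst' : FactChain H N (y * x) (t + s') (t' + s') := (hy t ht t' ht').add_right hs'
  rw [mul_comm, add_comm t, add_comm t'] at hst'
  exact hst.trans hst'

theorem of_isAtomIn (hx : IsAtomIn H x) (hy : IsAtomIn H y) (hx' : IsAtomIn H x')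
    (hy' : IsAtomIn H y') (h : x * y = x' * y') (hN : 2 ≤ N) :
    SplittingsLinked H N (x * y) x y x' y' := by
  intro s hs t ht s' hs' t' ht'
  refine .single (add_mem_factorizationsOf hs ht) (h ▸ add_mem_factorizationsOf hs' ht') ?_
  obtain rfl := hx.eq_singleton_of_mem_factorizationsOf hs
  obtain rfl := hy.eq_singleton_of_mem_factorizationsOf ht
  obtain rfl := hx'.eq_singleton_of_mem_factorizationsOf hs'
  obtain rfl := hy'.eq_singleton_of_mem_factorizationsOf ht'
  exact (factDist_le_max_card _ _).trans (by simpa using hN)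

end SplittingsLinked

section InductionStep

variable (hF : IsFactorialMonoid F) (hH : IsConductorSubmonoid H)
  (ih : ∀ b, ProperDvd b a → CatenaryDegreeLE H 3 b)
include hH ih

theorem splittingsLinked_refl (hx : IsNonunitIn H x) (hy : IsNonunitIn H y) (ha : x * y = a) :
    SplittingsLinked H 3 a x y x y := by
  subst ha
  exact .refl_of_catenaryDegreeLE (ih x (hH.properDvd_mul_left hy))
    (ih y (hH.properDvd_mul_right hx))

theorem splittingsLinked_comm (hx : IsNonunitIn H x) (hy : IsNonunitIn H y) (ha : x * y = a) :
    SplittingsLinked H 3 a x y y x := by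
  intro s hs t ht t' ht' s' hs'
  rw [add_comm t']
  exact splittingsLinked_refl hH ih hx hy ha s hs t ht s' hs' t' ht'

include hF

theorem splittingsLinked_mul_of_card_le_two {q : F}
    (hq : ∀ u, IsAtomIn H u → ∃ s ∈ FactorizationsOf H (u * q), s.card ≤ 2)
    (hx : IsNonunitIn H x) (hy : IsNonunitIn H y) (ha : x * q * y = a) :
    SplittingsLinked H 3 a x (q * y) (x * q) y := by
  have hqy : IsNonunitIn H (q * y) := hH.isNonunitIn_of_dvd hy (dvd_mul_left y q)
  have hxq : IsNonunitIn H (x * q) := hH.isNonunitIn_mul_right hx q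
  have ha' : x * (q * y) = a := by rw [← mul_assoc, ha]
  obtain ⟨u, s, hus⟩ := hH.exists_cons_mem_factorizationsOf hF hx
  obtain ⟨v, t, hvt⟩ := hH.exists_cons_mem_factorizationsOf hF hy
  obtain ⟨s', hs', hs'_card⟩ := hq u (hus.1 u (Multiset.mem_cons_self u s))
  obtain ⟨t', ht', ht'_card⟩ := hq v (hvt.1 v (Multiset.mem_cons_self v t))
  have hs's : s' + s ∈ FactorizationsOf H (x * q) :=
    add_mem_factorizationsOf_of_cons hus hs'
  have ht't : t' + t ∈ FactorizationsOf H (q * y) :=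
    mul_comm y q ▸ add_mem_factorizationsOf_of_cons hvt ht'
  have hdist : factDist (u ::ₘ s + (t' + t)) (s' + s + v ::ₘ t) ≤ 3 := by
    have hl : u ::ₘ s + (t' + t) = u ::ₘ t' + (s + t) := by
      simp only [← Multiset.singleton_add]; ac_rfl
    have hr : s' + s + v ::ₘ t = v ::ₘ s' + (s + t) := by
      simp only [← Multiset.singleton_add]; ac_rfl
    rw [hl, hr, factDist_add_right]
    refine (factDist_le_max_card _ _).trans ?_
    simp only [Multiset.card_cons]
    omega
  intro z hz w hw z' hz' w' hw'
  have hstep : FactChain H 3 a (u ::ₘ s + (t' + t)) (s' + s + v ::ₘ t) :=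
    .single (ha' ▸ add_mem_factorizationsOf hus ht't) (ha ▸ add_mem_factorizationsOf hs's hvt) hdist
  exact ((splittingsLinked_refl hH ih hx hqy ha' z hz w hw _ hus _ ht't).trans hstep).trans
    (splittingsLinked_refl hH ih hxq hy ha _ hs's _ hvt z' hz' w' hw')

theorem splittingsLinked_mul (hx : IsNonunitIn H x) (hy : IsNonunitIn H y) (t : F)
    (ha : x * t * y = a) : SplittingsLinked H 3 a x (t * y) (x * t) y := by
  induction t using hF.induction generalizing x with
  | unit e he =>
    exact splittingsLinked_mul_of_card_le_two hF hH ih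
      (fun u hu => hH.exists_mem_factorizationsOf_mul_isUnit hu he) hx hy ha
  | prime_mul p t hp iht =>
    have hty : IsNonunitIn H (t * y) := hH.isNonunitIn_of_dvd hy (dvd_mul_left y t)
    have hxp : IsNonunitIn H (x * p) := hH.isNonunitIn_mul_right hx p
    have hp_step : SplittingsLinked H 3 a x (p * (t * y)) (x * p) (t * y) :=
      splittingsLinked_mul_of_card_le_two hF hH ih
        (fun u hu => hH.exists_mem_factorizationsOf_mul_prime hu hp) hx hty
        (by simpa only [mul_assoc] using ha)
    have ht_step : SplittingsLinked H 3 a (x * p) (t * y) (x * p * t) y :=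
      iht hxp (by simpa only [mul_assoc] using ha)
    rw [mul_assoc p, ← mul_assoc x]
    exact hp_step.trans hF hH hxp hty ht_step

theorem splittingsLinked_of_dvd (hx : IsNonunitIn H x) (hy' : IsNonunitIn H y') (hxx' : x ∣ x')
    (ha : x * y = a) (ha' : x' * y' = a) : SplittingsLinked H 3 a x y x' y' := by
  obtain ⟨t, rfl⟩ := hxx'
  obtain rfl : y = t * y' := mul_left_cancel (ha.trans (ha'.symm.trans (mul_assoc ..)))
  exact splittingsLinked_mul hF hH ih hx hy' t ha'

theorem splittingsLinked_or_exists_properDvd {p q r s : F} (hpq : IsNonunitIn H (p * q))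
    (hrs : IsNonunitIn H (r * s)) (hpr : IsNonunitIn H (p * r)) (hqs : IsNonunitIn H (q * s))
    (ha : p * r * (q * s) = a) (hat : ¬IsAtomIn H (p * r)) :
    SplittingsLinked H 3 a (p * r) (q * s) (p * q) (r * s) ∨
      ∃ p' q', ProperDvd p' p ∧ p' * q' = p * q ∧ IsNonunitIn H (p' * r) ∧
        IsNonunitIn H (q' * s) ∧ SplittingsLinked H 3 a (p * r) (q * s) (p' * r) (q' * s) := by
  obtain ⟨c, d, hc, hd, hcd⟩ := hpr.exists_eq_mul_of_not_isAtomIn hat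
  have := hF.decompositionMonoid
  obtain ⟨c₁, d₁, c₂, d₂, rfl, rfl, rfl, rfl⟩ := exists_common_refinement_of_mul_eq_mul hcd
  by_cases hd₁ : IsUnit d₁
  · left
    have hcqs : IsNonunitIn H (c₁ * c₂ * (q * s)) := hH.isNonunitIn_mul_right hc _
    have hda : d₁ * d₂ * (c₁ * c₂ * (q * s)) = a := by rw [← ha]; ac_rfl
    have hrsa : c₂ * d₂ * s * (c₁ * d₁ * q) = a := by rw [← ha]; ac_rfl
    have hd_dvd : d₁ * d₂ ∣ c₂ * d₂ * s := hd₁.mul_left_dvd.2 ⟨c₂ * s, by ac_rfl⟩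
    have hlink := splittingsLinked_of_dvd hF hH ih hd hqs
      (Dvd.intro (c₁ * c₂) (by rw [hcd]; ac_rfl)) hda ha
    have hlink' := splittingsLinked_of_dvd hF hH ih hd hpq hd_dvd hda hrsa
    exact (hlink.symm.trans hF hH hd hcqs hlink').trans hF hH hrs hpq
      (splittingsLinked_comm hH ih hrs hpq hrsa)
  · right
    have hcr : IsNonunitIn H (c₁ * (c₂ * d₂)) := hH.isNonunitIn_of_dvd hc ⟨d₂, by ac_rfl⟩
    have hdqs : IsNonunitIn H (d₁ * q * s) := hH.isNonunitIn_of_dvd hqs ⟨d₁, by ac_rfl⟩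
    exact ⟨c₁, d₁ * q, ⟨d₁, hd₁, rfl⟩, (mul_assoc ..).symm, hcr, hdqs,
      (splittingsLinked_of_dvd hF hH ih hcr hqs ⟨d₁, by ac_rfl⟩ (by rw [← ha]; ac_rfl) ha).symm⟩

theorem splittingsLinked_or_exists_isAtomIn {v w p q r s : F} (hv : IsNonunitIn H v)
    (hw : IsNonunitIn H w) (hpq : p * q = v) (hrs : r * s = w) (hpr : IsNonunitIn H (p * r))
    (hqs : IsNonunitIn H (q * s)) (ha : v * w = a) :
    SplittingsLinked H 3 a (p * r) (q * s) v w ∨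
      ∃ x y, IsAtomIn H x ∧ IsAtomIn H y ∧ x * y = a ∧
        SplittingsLinked H 3 a (p * r) (q * s) x y := by
  induction hm : p * s using hF.wellFounded_properDvd.induction generalizing p q r s with
  | _ m ihm =>
    subst hpq hrs hm
    have ha' : p * r * (q * s) = a := (mul_mul_mul_comm ..).trans ha
    have via_smaller {p' q' r' s' : F} (hlt : ProperDvd (p' * s') (p * s)) (hpq : p' * q' = p * q)
        (hrs : r' * s' = r * s) (hpr' : IsNonunitIn H (p' * r')) (hqs' : IsNonunitIn H (q' * s'))
        (hlink : SplittingsLinked H 3 a (p * r) (q * s) (p' * r') (q' * s')) :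
        SplittingsLinked H 3 a (p * r) (q * s) (p * q) (r * s) ∨
          ∃ x y, IsAtomIn H x ∧ IsAtomIn H y ∧ x * y = a ∧
            SplittingsLinked H 3 a (p * r) (q * s) x y :=
      (ihm _ hlt hpq hrs hpr' hqs' rfl).imp (hlink.trans hF hH hpr' hqs')
        fun ⟨x, y, hx, hy, hxy, h⟩ => ⟨x, y, hx, hy, hxy, hlink.trans hF hH hpr' hqs' h⟩
    by_cases hpr_atom : IsAtomIn H (p * r)
    · by_cases hqs_atom : IsAtomIn H (q * s)
      · exact .inr ⟨p * r, q * s, hpr_atom, hqs_atom, ha',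
          splittingsLinked_refl hH ih hpr hqs ha'⟩
      rw [mul_comm r s] at hw
      rw [mul_comm p q] at hv
      rw [mul_comm q s] at hqs hqs_atom
      rw [mul_comm p r] at hpr
      rcases splittingsLinked_or_exists_properDvd hF hH ih hw hv hqs hpr
        (by rw [← ha]; ac_rfl) hqs_atom with hlink | ⟨s', r', hlt, hsr, hsq, hrp, hlink⟩
      · left
        simpa only [mul_comm] using hlink.swap
      · exact via_smaller (by simpa only [mul_comm] using hlt.mul_right p) rfl
          (by simpa only [mul_comm] using hsr) (mul_comm r' p ▸ hrp) (mul_comm s' q ▸ hsq)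
          (by simpa only [mul_comm] using hlink.swap)
    · rcases splittingsLinked_or_exists_properDvd hF hH ih hv hw hpr hqs ha' hpr_atom with
        hlink | ⟨p', q', hlt, hpq, hpr', hqs', hlink⟩
      · exact .inl hlink
      · exact via_smaller (hlt.mul_right s) hpq rfl hpr' hqs' hlink

theorem splittingsLinked (hx : IsNonunitIn H x) (hy : IsNonunitIn H y) (hx' : IsNonunitIn H x')
    (hy' : IsNonunitIn H y') (ha : x * y = a) (ha' : x' * y' = a) :
    SplittingsLinked H 3 a x y x' y' := by
  have := hF.decompositionMonoid
  obtain ⟨p, r, q, s, rfl, rfl, hpq, hrs⟩ :=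
    exists_common_refinement_of_mul_eq_mul (ha.trans ha'.symm)
  rcases splittingsLinked_or_exists_isAtomIn hF hH ih hx' hy' hpq.symm hrs.symm hx hy ha' with
    hlink | ⟨u, v, hu, hv, huv, hlink⟩
  · exact hlink
  subst hpq hrs
  rcases splittingsLinked_or_exists_isAtomIn hF hH ih hx hy rfl rfl hx' hy' ha with
    hlink' | ⟨u', v', hu', hv', huv', hlink'⟩
  · exact hlink'.symm
  have huv_link : SplittingsLinked H 3 a u v u' v' :=
    huv ▸ .of_isAtomIn hu hv hu' hv' (huv.trans huv'.symm) (by decide)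
  exact (hlink.trans hF hH hu.isNonunitIn hv.isNonunitIn huv_link).trans hF hH
    hu'.isNonunitIn hv'.isNonunitIn hlink'.symm

end InductionStep

theorem IsConductorSubmonoid.catenaryDegreeLE (hH : IsConductorSubmonoid H)
    (hF : IsFactorialMonoid F) (a : F) : CatenaryDegreeLE H 3 a := by
  induction a using hF.wellFounded_properDvd.induction with
  | _ a ih =>
    intro z hz z' hz'
    rcases le_or_gt z.card 1 with hcard | hcard
    · rw [eq_of_mem_factorizationsOf_of_card_le_one hz hz' hcard]
      exact .refl
    rcases le_or_gt z'.card 1 with hcard' | hcard'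
    · rw [eq_of_mem_factorizationsOf_of_card_le_one hz' hz hcard']
      exact .refl
    obtain ⟨x, y, s, t, hx, hy, hs, ht, ha, rfl⟩ := hH.exists_eq_add_of_one_lt_card hz hcard
    obtain ⟨x', y', s', t', hx', hy', hs', ht', ha', rfl⟩ :=
      hH.exists_eq_add_of_one_lt_card hz' hcard'
    exact splittingsLinked hF hH ih hx hy hx' hy' ha ha' s hs t ht s' hs' t' ht'

end Splittings

/-- every conductor submonoid of a factorial monoid has catenary degree at
most `3`; consequently all sets of lengths are intervals. -/
theorem stmt_14 {F : Type*} [CancelCommMonoid F] [DecidableEq F]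
    (hF : IsFactorialMonoid F) (H : Submonoid F) (hH : IsConductorSubmonoid H) :
    (∀ a : F, ∀ z ∈ FactorizationsOf H a, ∀ z' ∈ FactorizationsOf H a,
      ∃ (k : ℕ) (c : ℕ → Multiset F), c 0 = z ∧ c k = z' ∧
        (∀ i ≤ k, c i ∈ FactorizationsOf H a) ∧
        ∀ i < k, factDist (c i) (c (i + 1)) ≤ 3) ∧
    (∀ a : F, ∀ m ∈ LengthSetOf H a, ∀ n ∈ LengthSetOf H a,
      ∀ j : ℕ, m ≤ j → j ≤ n → j ∈ LengthSetOf H a) := by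
  have hchain (a : F) : CatenaryDegreeLE H 3 a := hH.catenaryDegreeLE hF a
  refine ⟨fun a z hz z' hz' => (hchain a z hz z' hz').exists_seq hz, ?_⟩
  rintro a m ⟨z, hz, rfl⟩ n ⟨z', hz', rfl⟩ j hmj hjn
  exact (hchain a z hz z' hz').mem_lengthSetOf hz hmj hjn
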